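/- arXiv:1801.04803 — 2 statements merged into one kernel-verified Lean document; each statement's English description precedes it below -/
import Mathlib

section
/- Let q be a prime power and let v, d, k be integers with d even and 2 ≤ d/2 ≤ k ≤ v/2. Let C be a (v,#C,d;k)_q constant dimension code that contains a (v,d;k)_q lifted MRD code, and let c and y be integers with 1 ≤ y ≤ d/2, 1 ≤ c ≤ min{k−d/2, d/2}, and k − d/2 + 1 ≤ c + y. Then #C ≤ q^{(v−k)(k−d/2+1)} + ([v−k choose y]_q · [k choose c]_q / ([k−d/2 choose c]_q · [d/2 choose y]_q)) · q^{c(v−k−d/2)} + A_q(v−k, d−2(c−1); k−c+1). -/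
open Module

/-- The subspace of `F_q^v` of vectors whose first `k` coordinates vanish
(denoted `Γ` in the paper); its complement (as a set of vectors) is `Δ`. -/
def Gamma (K : Type) [Field K] (k v : ℕ) : Submodule K (Fin v → K) where
  carrier := {x | ∀ j : Fin v, (j : ℕ) < k → x j = 0}
  add_mem' := by
    intro a b ha hb j hj
    simp [ha j hj, hb j hj]
  zero_mem' := by
    intro j hj
    rfl
  smul_mem' := by
    intro c x hx j hj
    simp [hx j hj]

/-- The subspace distance `d_S(U,W) = dim(U+W) - dim(U ∩ W)`. -/
noncomputable def sDist {K : Type} [Field K] {v : ℕ}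
    (U W : Submodule K (Fin v → K)) : ℕ :=
  finrank K ↥(U ⊔ W) - finrank K ↥(U ⊓ W)

/-- A constant dimension code of dimension `k` and minimum subspace distance `d`. -/
def IsCDC (K : Type) [Field K] (v : ℕ) (d k : ℤ)
    (C : Set (Submodule K (Fin v → K))) : Prop :=
  (∀ U ∈ C, (finrank K U : ℤ) = k) ∧
  ∀ U ∈ C, ∀ W ∈ C, U ≠ W → d ≤ (sDist U W : ℤ)

/-- `A_q(v,d;k)`: the maximum cardinality of a `(v,M,d;k)_q` CDC. -/
noncomputable def Amax (K : Type) [Field K] (v : ℕ) (d k : ℤ) : ℕ :=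
  sSup {n | ∃ C : Set (Submodule K (Fin v → K)), IsCDC K v d k C ∧ C.ncard = n}

/-- Row `i` of the `k × v` matrix `(I_k | A)`. -/
def liftRow {K : Type} [Field K] {k v : ℕ} (A : Matrix (Fin k) (Fin (v - k)) K)
    (i : Fin k) : Fin v → K := fun j =>
  if (j : ℕ) < k then (if (i : ℕ) = (j : ℕ) then 1 else 0)
  else if h2 : (j : ℕ) - k < v - k then A i ⟨(j : ℕ) - k, h2⟩ else 0

/-- `M` is a `(v,d;k)_q` lifted MRD code: `M = { rowspan (I_k | A) : A ∈ R }`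
for a `[k × (v-k), q^((v-k)(k-d/2+1)), d/2]_q` rank metric code `R`. -/
def IsLMRD (q : ℕ) (K : Type) [Field K] (v d k : ℕ)
    (M : Set (Submodule K (Fin v → K))) : Prop :=
  ∃ R : Set (Matrix (Fin k) (Fin (v - k)) K),
    R.ncard = q ^ ((v - k) * (k - d / 2 + 1)) ∧
    (∀ A ∈ R, ∀ B ∈ R, A ≠ B → d / 2 ≤ (A - B).rank) ∧
    M = {U | ∃ A ∈ R, U = Submodule.span K (Set.range (liftRow A))}

/-- The Gaussian binomial coefficient `[a choose b]_q`, defined to be `0`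
unless `0 ≤ b ≤ a`. -/
noncomputable def qBin (q : ℕ) (a b : ℤ) : ℚ :=
  if 0 ≤ b ∧ b ≤ a then
    ∏ i ∈ Finset.range b.toNat,
      ((q : ℚ) ^ a - (q : ℚ) ^ (i : ℤ)) / ((q : ℚ) ^ b - (q : ℚ) ^ (i : ℤ))
  else 0

/-- `[[w, u; c]]_q = q^(u*c) * [w-u choose c]_q` for `0 ≤ c ≤ w-u`, else `0`. -/
noncomputable def qBinD (q : ℕ) (w u c : ℤ) : ℚ :=
  if 0 ≤ c ∧ c ≤ w - u then (q : ℚ) ^ (u * c) * qBin q (w - u) c else 0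

/-!
Let `Γ` be the subspace of vectors whose first `k` coordinates vanish. An MRD code is so large that
left multiplication by a full-rank matrix maps it onto all matrices; hence a codeword outside the
lifted MRD code meets `Γ` in dimension at least `δ = d / 2`, since it would otherwise share a
subspace of dimension `k - δ + 1` with some lifted codeword.

Split these remaining codewords by the dimension of their image modulo `Γ`. If it is less than `c`,
the codeword meets `Γ` in dimension at least `k - c + 1`, and choosing subspaces of the
intersections yields a constant dimension code inside `Γ`. If it is at least `c`, count the pairs
of a linearly independent `y`-tuple in `U ∩ Γ` and a `c`-tuple in `U` that is linearly independent
modulo `Γ`: such a pair spans dimension `c + y > k - δ`, so it lies in at most one codeword `U`, and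
the number of pairs inside `U` grows with `dim (U ∩ Γ) ≥ δ`.
-/

section IndepCount

/-- For `x = q` a prime power, the number of `m`-tuples of vectors of an `n`-dimensional space over
`F_q` that are linearly independent modulo a fixed `s`-dimensional subspace; it is `0` if
`n < s + m` and `s ≤ n`. -/
def indepCount (x : ℚ) (n s m : ℕ) : ℚ := ∏ i ∈ Finset.range m, (x ^ n - x ^ (s + i))

variable {x : ℚ} {n s m : ℕ}

theorem indepCount_pos (hx : 1 < x) (h : s + m ≤ n) : 0 < indepCount x n s m :=
  Finset.prod_pos fun i hi => sub_pos.2 <| pow_lt_pow_right₀ hx <| by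
    have := Finset.mem_range.1 hi
    omega

theorem indepCount_eq_zero (hs : s ≤ n) (h : n < s + m) : indepCount x n s m = 0 :=
  Finset.prod_eq_zero (i := n - s) (Finset.mem_range.2 (by omega)) <| by
    rw [Nat.add_sub_cancel' hs, sub_self]

theorem indepCount_add_left (x : ℚ) (n s m : ℕ) :
    indepCount x (n + s) s m = x ^ (s * m) * indepCount x n 0 m := by
  have hpow : x ^ (s * m) = ∏ _i ∈ Finset.range m, x ^ s := by
    rw [Finset.prod_const, Finset.card_range, pow_mul]
  rw [hpow, indepCount, indepCount, ← Finset.prod_mul_distrib]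
  exact Finset.prod_congr rfl fun i _ => by ring

theorem natCast_prod_pow_sub_pow {q : ℕ} (hq : 0 < q) (h : m ≤ n) :
    ((∏ i : Fin m, (q ^ n - q ^ (i : ℕ)) : ℕ) : ℚ) = indepCount q n 0 m := by
  rw [Fin.prod_univ_eq_prod_range (fun i => q ^ n - q ^ i), indepCount, Nat.cast_prod]
  refine Finset.prod_congr rfl fun i hi => ?_
  rw [Nat.cast_sub (Nat.pow_le_pow_right hq ((Finset.mem_range.1 hi).le.trans h)), zero_add,
    Nat.cast_pow, Nat.cast_pow]

theorem mul_indepCount_le_indepCount_succ (hx : 1 < x) (hm : 1 ≤ m) (h : m ≤ n) :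
    x * indepCount x n 0 m ≤ indepCount x (n + 1) 0 m := by
  simp only [indepCount, zero_add]
  induction m, hm using Nat.le_induction with
  | base =>
    simp only [Finset.prod_range_one, pow_zero, pow_succ]
    linarith
  | succ m _ ih =>
    have hle : x ^ m ≤ x ^ n := pow_le_pow_right₀ hx.le (by omega)
    have hle' : x ^ n ≤ x ^ (n + 1) := pow_le_pow_right₀ hx.le n.le_succ
    rw [Finset.prod_range_succ, Finset.prod_range_succ, ← mul_assoc]
    refine mul_le_mul (ih (by omega)) (by linarith) (sub_nonneg.2 hle) ?_
    refine Finset.prod_nonneg fun i hi => sub_nonneg.2 (pow_le_pow_right₀ hx.le ?_)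
    have := Finset.mem_range.1 hi
    omega

theorem indepCount_mul_sub (x : ℚ) (n s m : ℕ) :
    indepCount x n s m * (x ^ n - x ^ (s + m)) =
      (x ^ n - x ^ s) * indepCount x n (s + 1) m := by
  have h := Finset.prod_range_succ' (fun i => x ^ n - x ^ (s + i)) m
  rw [Finset.prod_range_succ] at h
  simp only [indepCount, h, add_zero, mul_comm (x ^ n - x ^ s), add_assoc, add_comm 1]

theorem indepCount_le_mul_indepCount_succ (hx : 2 ≤ x) (h : s + 1 + m ≤ n) :
    indepCount x n s m ≤ x * indepCount x n (s + 1) m := by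
  have hx1 : 1 < x := by linarith
  have hlt : x ^ (s + m) < x ^ n := pow_lt_pow_right₀ hx1 (by omega)
  have hratio : x ^ n - x ^ s ≤ x * (x ^ n - x ^ (s + m)) := by
    have hle : x * x ^ (s + m) ≤ x ^ n := by
      rw [← pow_succ']
      exact pow_le_pow_right₀ hx1.le (by omega)
    have hdouble : 2 * x ^ n ≤ x * x ^ n := by gcongr
    have hs : 0 < x ^ s := by positivity
    linarith
  refine le_of_mul_le_mul_right ?_ (sub_pos.2 hlt)
  rw [indepCount_mul_sub]
  calc (x ^ n - x ^ s) * indepCount x n (s + 1) m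
      ≤ x * (x ^ n - x ^ (s + m)) * indepCount x n (s + 1) m := by
        gcongr
        exact (indepCount_pos hx1 h).le
    _ = x * indepCount x n (s + 1) m * (x ^ n - x ^ (s + m)) := by ring

theorem indepCount_mul_indepCount_mono (hx : 2 ≤ x) {δ y c k : ℕ} (hy : 1 ≤ y) (hyδ : y ≤ δ)
    (hδs : δ ≤ s) (hs : s + c ≤ k) :
    indepCount x δ 0 y * indepCount x k δ c ≤ indepCount x s 0 y * indepCount x k s c := by
  have hx1 : 1 < x := by linarith
  induction s, hδs using Nat.le_induction with
  | base => exact le_rfl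
  | succ s hδs ih =>
    refine (ih (by omega)).trans ?_
    have hleft := indepCount_pos hx1 ((zero_add y).trans_le (hyδ.trans hδs))
    have hright := indepCount_pos hx1 hs
    calc indepCount x s 0 y * indepCount x k s c
        ≤ indepCount x s 0 y * (x * indepCount x k (s + 1) c) := by
          gcongr
          exact indepCount_le_mul_indepCount_succ hx hs
      _ = x * indepCount x s 0 y * indepCount x k (s + 1) c := by ring
      _ ≤ indepCount x (s + 1) 0 y * indepCount x k (s + 1) c := by
          gcongr
          exact mul_indepCount_le_indepCount_succ hx1 hy (hyδ.trans hδs)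

theorem qBin_natCast (q a b : ℕ) (h : b ≤ a) :
    qBin q a b = indepCount q a 0 b / indepCount q b 0 b := by
  rw [qBin, if_pos ⟨by positivity, by exact_mod_cast h⟩, indepCount, indepCount,
    ← Finset.prod_div_distrib]
  simp only [Int.toNat_natCast, zpow_natCast, zero_add]

theorem indepCount_div_eq_qBin {q n k δ y c : ℕ} (hq : 1 < q) (hyδ : y ≤ δ) (hδn : δ ≤ n)
    (hc : δ + c ≤ k) :
    indepCount q n 0 y * indepCount q (n + k) n c /
        (indepCount q δ 0 y * indepCount q k δ c) =
      qBin q n y * qBin q k c / (qBin q ((k : ℤ) - δ) c * qBin q δ y) *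
        (q : ℚ) ^ ((c : ℤ) * ((n : ℤ) - δ)) := by
  have hq1 : (1 : ℚ) < q := by exact_mod_cast hq
  obtain ⟨r, rfl⟩ := Nat.exists_eq_add_of_le' (show δ ≤ k by omega)
  have hδy := indepCount_pos hq1 ((zero_add y).trans_le hyδ)
  have hrc := indepCount_pos hq1 (show 0 + c ≤ r by omega)
  have hyy := indepCount_pos hq1 (zero_add y).le
  have hcc := indepCount_pos hq1 (zero_add c).le
  have hpow : (q : ℚ) ^ ((c : ℤ) * ((n : ℤ) - δ)) = (q : ℚ) ^ (n * c) / (q : ℚ) ^ (δ * c) := by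
    rw [← zpow_natCast, ← zpow_natCast, ← zpow_sub₀ (by positivity)]
    congr 1
    push_cast
    ring
  rw [show ((r + δ : ℕ) : ℤ) - δ = r by push_cast; ring, hpow, add_comm n,
    indepCount_add_left, indepCount_add_left, qBin_natCast q n y (by omega),
    qBin_natCast q (r + δ) c (by omega), qBin_natCast q r c (by omega), qBin_natCast q δ y hyδ]
  field_simp

end IndepCount

theorem ncard_mul_le_ncard_of_pairwiseDisjoint {ι α : Type*} {S : Set ι} (hS : S.Finite)
    {T : Set α} (hT : T.Finite) {f : ι → Set α} (hf : S.PairwiseDisjoint f)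
    (hfT : ∀ i ∈ S, f i ⊆ T) {N : ℚ} (hN : ∀ i ∈ S, N ≤ (f i).ncard) :
    S.ncard * N ≤ T.ncard := by
  have hfin : ∀ i ∈ S, (f i).Finite := fun i hi => hT.subset (hfT i hi)
  calc (S.ncard : ℚ) * N = ∑ _i ∈ hS.toFinset, N := by
        rw [Finset.sum_const, ← Set.ncard_eq_toFinset_card S hS, nsmul_eq_mul]
    _ ≤ ∑ i ∈ hS.toFinset, ((f i).ncard : ℚ) :=
        Finset.sum_le_sum fun i hi => hN i (hS.mem_toFinset.1 hi)
    _ = (⋃ i ∈ S, f i).ncard := by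
        rw [hS.ncard_biUnion hfin hf, finsum_mem_eq_finite_toFinset_sum _ hS, Nat.cast_sum]
    _ ≤ T.ncard := by
        exact_mod_cast Set.ncard_le_ncard (Set.iUnion₂_subset hfT) hT

section LinearAlgebra

variable {K E W : Type*} [Field K] [AddCommGroup E] [Module K E] [AddCommGroup W] [Module K W]

theorem exists_le_finrank_eq (U : Submodule K E) {m : ℕ} (hm : m ≤ finrank K U) :
    ∃ Y ≤ U, finrank K Y = m := by
  obtain ⟨b, hb⟩ := exists_linearIndependent_of_le_finrank hm
  refine ⟨(Submodule.span K (Set.range b)).map U.subtype, Submodule.map_subtype_le _ _, ?_⟩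
  rw [Submodule.finrank_map_subtype_eq, finrank_span_eq_card hb, Fintype.card_fin]

theorem finrank_map_of_injective {f : E →ₗ[K] W} (hf : Function.Injective f)
    (U : Submodule K E) : finrank K (U.map f) = finrank K U :=
  (Submodule.equivMapOfInjective f hf U).finrank_eq.symm

theorem exists_linearIndependent_comp_of_le_finrank_map (g : E →ₗ[K] W) (U : Submodule K E)
    {m : ℕ} (hm : m ≤ finrank K (U.map g)) :
    ∃ b : Fin m → E, (∀ i, b i ∈ U) ∧ LinearIndependent K (g ∘ b) := by
  obtain ⟨f, hf⟩ := exists_linearIndependent_of_le_finrank hm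
  choose b hbU hb using fun i => (f i).2
  have hgb : g ∘ b = (U.map g).subtype ∘ f := funext hb
  exact ⟨b, hbU, hgb ▸ hf.map' _ (Submodule.ker_subtype _)⟩

theorem finrank_map_add_finrank_inf_ker [FiniteDimensional K E] (g : E →ₗ[K] W)
    (U : Submodule K E) : finrank K (U.map g) + finrank K ↥(U ⊓ g.ker) = finrank K U := by
  rw [← (g.domRestrict U).finrank_range_add_finrank_ker, LinearMap.range_domRestrict,
    LinearMap.ker_domRestrict, ← Submodule.map_comap_subtype, Submodule.finrank_map_subtype_eq]

theorem natCard_preimage_of_surjective {G H : Type*} [AddGroup G] [AddGroup H] {f : G →+ H}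
    (hf : Function.Surjective f) (s : Set H) :
    Nat.card (f ⁻¹' s) = Nat.card f.ker * Nat.card s := by
  let e := QuotientAddGroup.quotientKerEquivOfSurjective f hf
  have hs : f ⁻¹' s = QuotientAddGroup.mk (s := f.ker) ⁻¹' (e ⁻¹' s) := rfl
  rw [hs, Nat.card_congr (QuotientAddGroup.preimageMkEquivAddSubgroupProdSet _ _), Nat.card_prod,
    Nat.card_preimage_of_injective e.injective (by simp [e.surjective.range_eq])]

/-- The `m`-tuples of vectors of `U` that are linearly independent modulo `X`. -/
def indepTuples (X U : Submodule K E) (m : ℕ) : Set (Fin m → E) :=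
  {b | (∀ i, b i ∈ U) ∧ LinearIndependent K (X.mkQ ∘ b)}

theorem indepTuples_mono (X : Submodule K E) {U V : Submodule K E} (hUV : U ≤ V) (m : ℕ) :
    indepTuples X U m ⊆ indepTuples X V m :=
  fun _ hb => ⟨fun i => hUV (hb.1 i), hb.2⟩

theorem add_le_finrank_of_mem_indepTuples [FiniteDimensional K E] {X U : Submodule K E} {y c : ℕ}
    {a : Fin y → E} {b : Fin c → E} (haX : ∀ i, a i ∈ X) (ha : a ∈ indepTuples ⊥ U y)
    (hb : b ∈ indepTuples X U c) : c + y ≤ finrank K U := by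
  have haLI : LinearIndependent K fun i => (⟨a i, haX i⟩ : X) :=
    .of_comp ((⊥ : Submodule K E).mkQ ∘ₗ X.subtype) ha.2
  have hLI := haLI.sumElim_of_quotient b hb.2
  have hspan : Submodule.span K (Set.range (Sum.elim a b)) ≤ U := by
    rw [Submodule.span_le, Set.Sum.elim_range, Set.union_subset_iff]
    exact ⟨Set.range_subset_iff.2 ha.1, Set.range_subset_iff.2 hb.1⟩
  have h := Submodule.finrank_mono hspan
  rwa [finrank_span_eq_card hLI, Fintype.card_sum, Fintype.card_fin, Fintype.card_fin,
    add_comm] at h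

variable [Fintype K] [Finite E]

variable (K E) in
theorem natCard_linearIndependent (m : ℕ) :
    (Nat.card {b : Fin m → E // LinearIndependent K b} : ℚ) =
      indepCount (Fintype.card K) (finrank K E) 0 m := by
  by_cases hm : m ≤ finrank K E
  · rw [card_linearIndependent hm, natCast_prod_pow_sub_pow Fintype.card_pos hm]
  · have : IsEmpty {b : Fin m → E // LinearIndependent K b} :=
      ⟨fun b => hm (by simpa using b.2.fintype_card_le_finrank)⟩
    rw [Nat.card_of_isEmpty, Nat.cast_zero, indepCount_eq_zero (Nat.zero_le _) (by omega)]

theorem natCard_linearIndependent_comp (g : E →ₗ[K] W) (m : ℕ) :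
    (Nat.card {b : Fin m → E // LinearIndependent K (g ∘ b)} : ℚ) =
      indepCount (Fintype.card K) (finrank K E) (finrank K g.ker) m := by
  have : Finite g.range := Finite.of_surjective _ g.surjective_rangeRestrict
  have hsurj : Function.Surjective (g.rangeRestrict.compLeft (Fin m)) :=
    g.surjective_rangeRestrict.comp_left
  have hpre : {b : Fin m → E | LinearIndependent K (g ∘ b)} =
      g.rangeRestrict.compLeft (Fin m) ⁻¹' {h | LinearIndependent K h} := by
    ext b
    exact g.range.subtype.linearIndependent_iff (v := g.rangeRestrict ∘ b)
      (Submodule.ker_subtype _)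
  have hcard : Nat.card (g.rangeRestrict.compLeft (Fin m) ⁻¹' {h | LinearIndependent K h}) =
      Nat.card (g.rangeRestrict.compLeft (Fin m)).ker *
        Nat.card {h : Fin m → g.range // LinearIndependent K h} :=
    natCard_preimage_of_surjective (f := (g.rangeRestrict.compLeft (Fin m)).toAddMonoidHom) hsurj _
  have hker : finrank K (g.rangeRestrict.compLeft (Fin m)).ker = finrank K g.ker * m := by
    have h1 := (g.rangeRestrict.compLeft (Fin m)).finrank_range_add_finrank_ker
    rw [LinearMap.range_eq_top.2 hsurj, finrank_top, finrank_pi_fintype, finrank_pi_fintype,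
      Fin.sum_const, Fin.sum_const, ← g.finrank_range_add_finrank_ker, smul_add] at h1
    simpa [mul_comm] using h1
  change (Nat.card {b : Fin m → E | LinearIndependent K (g ∘ b)} : ℚ) = _
  rw [hpre, hcard, Nat.cast_mul, natCard_linearIndependent,
    Module.natCard_eq_pow_finrank (K := K), hker, Nat.card_eq_fintype_card, Nat.cast_pow,
    ← g.finrank_range_add_finrank_ker, indepCount_add_left]

theorem ncard_indepTuples (X U : Submodule K E) (m : ℕ) :
    ((indepTuples X U m).ncard : ℚ) =
      indepCount (Fintype.card K) (finrank K U) (finrank K ↥(U ⊓ X)) m := by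
  have himage : indepTuples X U m =
      (U.subtype ∘ ·) '' {b : Fin m → U | LinearIndependent K ((X.mkQ ∘ₗ U.subtype) ∘ b)} := by
    ext b
    constructor
    · rintro ⟨hbU, hb⟩
      exact ⟨fun i => ⟨b i, hbU i⟩, hb, rfl⟩
    · rintro ⟨b, hb, rfl⟩
      exact ⟨fun i => (b i).2, hb⟩
  rw [himage, Set.ncard_image_of_injective _ U.injective_subtype.comp_left]
  change (Nat.card {b : Fin m → U // LinearIndependent K ((X.mkQ ∘ₗ U.subtype) ∘ b)} : ℚ) = _
  rw [natCard_linearIndependent_comp, LinearMap.ker_comp, Submodule.ker_mkQ,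
    ← Submodule.map_comap_subtype, Submodule.finrank_map_subtype_eq]

theorem ncard_mul_indepCount_le (X : Submodule K E) {S : Set (Submodule K E)} {k δ y c : ℕ}
    (hy : 1 ≤ y) (hyδ : y ≤ δ) (hk : ∀ U ∈ S, finrank K U = k)
    (hδ : ∀ U ∈ S, δ ≤ finrank K ↥(U ⊓ X)) (hc : ∀ U ∈ S, finrank K ↥(U ⊓ X) + c ≤ k)
    (hS : S.Pairwise fun U V => finrank K ↥(U ⊓ V) < c + y) :
    S.ncard * (indepCount (Fintype.card K) δ 0 y * indepCount (Fintype.card K) k δ c) ≤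
      indepCount (Fintype.card K) (finrank K X) 0 y *
        indepCount (Fintype.card K) (finrank K E) (finrank K X) c := by
  have : Finite (Submodule K E) := Finite.of_injective _ SetLike.coe_injective
  have hq : (2 : ℚ) ≤ Fintype.card K := by exact_mod_cast Fintype.one_lt_card (α := K)
  let pairs (U : Submodule K E) := indepTuples ⊥ (U ⊓ X) y ×ˢ indepTuples X U c
  have hcard (U : Submodule K E) : ((pairs U).ncard : ℚ) =
      indepCount (Fintype.card K) (finrank K ↥(U ⊓ X)) 0 y *
        indepCount (Fintype.card K) (finrank K U) (finrank K ↥(U ⊓ X)) c := by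
    rw [Set.ncard_prod, Nat.cast_mul, ncard_indepTuples, ncard_indepTuples, inf_bot_eq, finrank_bot]
  have hdisj : S.PairwiseDisjoint pairs := fun U hU V hV hne => by
    refine Set.disjoint_left.2 fun ⟨a, b⟩ ⟨haU, hbU⟩ ⟨haV, hbV⟩ => (hS hU hV hne).not_ge ?_
    exact add_le_finrank_of_mem_indepTuples (fun i => (haU.1 i).2)
      ⟨fun i => ⟨(haU.1 i).1, (haV.1 i).1⟩, haU.2⟩ ⟨fun i => ⟨hbU.1 i, hbV.1 i⟩, hbU.2⟩
  have hsub (U : Submodule K E) : pairs U ⊆ pairs ⊤ :=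
    Set.prod_mono (indepTuples_mono ⊥ (inf_le_inf_right X le_top) y) (indepTuples_mono X le_top c)
  have h := ncard_mul_le_ncard_of_pairwiseDisjoint S.toFinite (Set.toFinite _) hdisj
    (fun U _ => hsub U) fun U hU => by
      rw [hcard, hk U hU]
      exact indepCount_mul_indepCount_mono hq hy hyδ (hδ U hU) (hc U hU)
  rwa [hcard, top_inf_eq, finrank_top] at h

theorem ncard_le_qBin (X : Submodule K E) {S : Set (Submodule K E)} {k δ y c : ℕ}
    (hy : 1 ≤ y) (hyδ : y ≤ δ) (hδX : δ ≤ finrank K X) (hδk : δ + c ≤ k)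
    (hE : finrank K E = finrank K X + k) (hk : ∀ U ∈ S, finrank K U = k)
    (hδ : ∀ U ∈ S, δ ≤ finrank K ↥(U ⊓ X)) (hc : ∀ U ∈ S, finrank K ↥(U ⊓ X) + c ≤ k)
    (hS : S.Pairwise fun U V => finrank K ↥(U ⊓ V) < c + y) :
    (S.ncard : ℚ) ≤
      qBin (Fintype.card K) (finrank K X) y * qBin (Fintype.card K) k c /
          (qBin (Fintype.card K) ((k : ℤ) - δ) c * qBin (Fintype.card K) δ y) *
        (Fintype.card K : ℚ) ^ ((c : ℤ) * ((finrank K X : ℤ) - δ)) := by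
  have hq := Fintype.one_lt_card (α := K)
  have hq1 : (1 : ℚ) < Fintype.card K := by exact_mod_cast hq
  have h := ncard_mul_indepCount_le X hy hyδ hk hδ hc hS
  rwa [← le_div_iff₀ (mul_pos (indepCount_pos hq1 (by omega)) (indepCount_pos hq1 hδk)), hE,
    indepCount_div_eq_qBin hq hyδ hδX hδk] at h

end LinearAlgebra

section Code

variable {K : Type} [Field K] {v : ℕ}

theorem sDist_map {n : ℕ} {f : (Fin n → K) →ₗ[K] (Fin v → K)} (hf : Function.Injective f)
    (U W : Submodule K (Fin n → K)) : sDist (U.map f) (W.map f) = sDist U W := by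
  rw [sDist, ← Submodule.map_sup, ← Submodule.map_inf f hf, finrank_map_of_injective hf,
    finrank_map_of_injective hf, sDist]

theorem sDist_add_two_mul_finrank_inf (U W : Submodule K (Fin v → K)) :
    sDist U W + 2 * finrank K ↥(U ⊓ W) = finrank K U + finrank K W := by
  have hmodular := Submodule.finrank_sup_add_finrank_inf_eq U W
  have hle : finrank K ↥(U ⊓ W) ≤ finrank K ↥(U ⊔ W) := Submodule.finrank_mono inf_le_sup
  unfold sDist
  omega

theorem sDist_self (U : Submodule K (Fin v → K)) : sDist U U = 0 := by
  rw [sDist, sup_idem, inf_idem, Nat.sub_self]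

namespace IsCDC

variable {d k : ℤ} {C : Set (Submodule K (Fin v → K))}

theorem mono {D : Set (Submodule K (Fin v → K))} (hC : IsCDC K v d k C) (hDC : D ⊆ C) :
    IsCDC K v d k D :=
  ⟨fun U hU => hC.1 U (hDC hU), fun U hU W hW => hC.2 U (hDC hU) W (hDC hW)⟩

theorem add_two_mul_finrank_inf_le (hC : IsCDC K v d k C) {U W : Submodule K (Fin v → K)}
    (hU : U ∈ C) (hW : W ∈ C) (hne : U ≠ W) : d + 2 * finrank K ↥(U ⊓ W) ≤ 2 * k := by
  have hdist := hC.2 U hU W hW hne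
  have hsum := sDist_add_two_mul_finrank_inf U W
  have hdimU := hC.1 U hU
  have hdimW := hC.1 W hW
  omega

theorem ncard_le_Amax [Finite K] (hC : IsCDC K v d k C) : C.ncard ≤ Amax K v d k := by
  have : Finite (Submodule K (Fin v → K)) := Finite.of_injective _ SetLike.coe_injective
  refine le_csSup ⟨Nat.card (Submodule K (Fin v → K)), ?_⟩ ⟨C, hC, rfl⟩
  rintro _ ⟨D, -, rfl⟩
  exact Set.ncard_le_card D

theorem ncard_le_Amax_finrank [Finite K] (hC : IsCDC K v d k C) (X : Submodule K (Fin v → K))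
    (hX : ∀ U ∈ C, U ≤ X) : C.ncard ≤ Amax K (finrank K X) d k := by
  let e : (Fin (finrank K X) → K) ≃ₗ[K] X := LinearEquiv.ofFinrankEq _ _ (by simp)
  let f : (Fin (finrank K X) → K) →ₗ[K] (Fin v → K) := X.subtype ∘ₗ e.toLinearMap
  have hf : Function.Injective f := X.injective_subtype.comp e.injective
  have hrange : f.range = X := by
    rw [LinearMap.range_comp_of_range_eq_top _ e.range, X.range_subtype]
  have hmap : ∀ U ∈ C, (U.comap f).map f = U := fun U hU => by
    rw [Submodule.map_comap_eq, hrange, inf_eq_right.2 (hX U hU)]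
  have hinj : Set.InjOn (Submodule.comap f) C := fun U hU W hW h => by
    rw [← hmap U hU, ← hmap W hW, h]
  rw [← hinj.ncard_image]
  refine ncard_le_Amax ⟨?_, ?_⟩
  · rintro _ ⟨U, hU, rfl⟩
    rw [← finrank_map_of_injective hf, hmap U hU, hC.1 U hU]
  · rintro _ ⟨U, hU, rfl⟩ _ ⟨W, hW, rfl⟩ hne
    rw [← sDist_map hf, hmap U hU, hmap W hW]
    exact hC.2 U hU W hW fun h => hne (congrArg _ h)

theorem ncard_le_Amax_of_lt_finrank_inf_add [Finite K] (hC : IsCDC K v d k C)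
    (X : Submodule K (Fin v → K)) {c : ℤ} (hck : c ≤ k + 1) (hcd : 2 * (c - 1) < d)
    (hX : ∀ U ∈ C, k < finrank K ↥(U ⊓ X) + c) :
    C.ncard ≤ Amax K (finrank K X) (d - 2 * (c - 1)) (k - c + 1) := by
  obtain ⟨m, hm⟩ := Int.eq_ofNat_of_zero_le (show 0 ≤ k - c + 1 by omega)
  have hmX : ∀ U ∈ C, m ≤ finrank K ↥(U ⊓ X) := fun U hU => by
    have := hX U hU
    omega
  choose! Y hYle hYdim using fun U hU => exists_le_finrank_eq (U ⊓ X) (hmX U hU)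
  have hdist : ∀ U ∈ C, ∀ W ∈ C, U ≠ W → d - 2 * (c - 1) ≤ sDist (Y U) (Y W) := by
    intro U hU W hW hne
    have hinf : finrank K ↥(Y U ⊓ Y W) ≤ finrank K ↥(U ⊓ W) := Submodule.finrank_mono <|
      inf_le_inf ((hYle U hU).trans inf_le_left) ((hYle W hW).trans inf_le_left)
    have hUW := hC.add_two_mul_finrank_inf_le hU hW hne
    have hsum := sDist_add_two_mul_finrank_inf (Y U) (Y W)
    rw [hYdim U hU, hYdim W hW] at hsum
    omega
  have hinj : Set.InjOn Y C := fun U hU W hW hYeq => by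
    by_contra hne
    have h := hdist U hU W hW hne
    rw [hYeq, sDist_self] at h
    omega
  rw [← hinj.ncard_image]
  refine ncard_le_Amax_finrank ⟨?_, ?_⟩ X ?_
  · rintro _ ⟨U, hU, rfl⟩
    rw [hYdim U hU, hm]
  · rintro _ ⟨U, hU, rfl⟩ _ ⟨W, hW, rfl⟩ hne
    exact hdist U hU W hW fun h => hne (congrArg Y h)
  · rintro _ ⟨U, hU, rfl⟩
    exact (hYle U hU).trans inf_le_right

end IsCDC

end Code

section LiftedMRD

/-- An MRD code of minimum rank distance `r` has `q ^ (n * t)` elements with `t = m - r + 1`. -/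
theorem exists_mul_eq_of_ncard_eq {K : Type*} [Field K] [Fintype K] {m n t r : ℕ}
    {R : Set (Matrix (Fin m) (Fin n) K)} (hR : R.ncard = Fintype.card K ^ (n * t))
    (hrank : ∀ A ∈ R, ∀ B ∈ R, A ≠ B → r ≤ (A - B).rank) (htr : m < t + r)
    {P : Matrix (Fin t) (Fin m) K} (hP : LinearIndependent K P.row)
    (Q : Matrix (Fin t) (Fin n) K) : ∃ A ∈ R, P * A = Q := by
  have hinj : Set.InjOn (fun A => P * A) R := by
    intro A hA B hB hAB
    by_contra hne
    have hzero : P * (A - B) = 0 := by rw [Matrix.mul_sub, sub_eq_zero]; exact hAB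
    have hsum := Matrix.rank_add_rank_le_card_of_mul_eq_zero hzero
    have hle := hrank A hA B hB hne
    rw [hP.rank_matrix, Fintype.card_fin, Fintype.card_fin] at hsum
    omega
  have himage : (fun A => P * A) '' R = Set.univ := by
    refine Set.eq_of_subset_of_ncard_le (Set.subset_univ _) ?_ Set.finite_univ
    rw [hinj.ncard_image, hR, Set.ncard_univ, Module.natCard_eq_pow_finrank (K := K),
      Nat.card_eq_fintype_card, Module.finrank_matrix, finrank_self, mul_one, Fintype.card_fin,
      Fintype.card_fin, mul_comm]
  exact himage.ge (Set.mem_univ Q)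

variable {K : Type} [Field K] {v k : ℕ}

/-- The projection of `F_q^v` onto the first `k` coordinates, the identity part of `(I_k | A)`. -/
def headProj (K : Type) [Field K] {k v : ℕ} (h : k ≤ v) : (Fin v → K) →ₗ[K] (Fin k → K) :=
  LinearMap.funLeft K K (Fin.castLE h)

/-- The projection of `F_q^v` onto the last `v - k` coordinates, the `A` part of `(I_k | A)`. -/
def tailProj (K : Type) [Field K] {k v : ℕ} (h : k ≤ v) : (Fin v → K) →ₗ[K] (Fin (v - k) → K) :=
  LinearMap.funLeft K K fun j => ⟨k + j, by omega⟩

theorem ker_headProj (h : k ≤ v) : (headProj K h).ker = Gamma K k v := by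
  ext x
  exact ⟨fun hx j hj => congrFun hx ⟨j, hj⟩, fun hx => funext fun j => hx (Fin.castLE h j) j.2⟩

theorem finrank_Gamma (h : k ≤ v) : finrank K (Gamma K k v) = v - k := by
  have hsurj : (headProj K h).range = ⊤ := LinearMap.range_eq_top.2 <|
    LinearMap.funLeft_surjective_of_injective K K _ (Fin.castLE_injective h)
  have hsum := (headProj K h).finrank_range_add_finrank_ker
  rw [hsurj, ker_headProj, finrank_top, finrank_fin_fun, finrank_fin_fun] at hsum
  omega

theorem mem_span_liftRow (h : k ≤ v) (A : Matrix (Fin k) (Fin (v - k)) K) {w : Fin v → K}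
    (hw : Matrix.vecMul (headProj K h w) A = tailProj K h w) :
    w ∈ Submodule.span K (Set.range (liftRow A)) := by
  refine (Submodule.mem_span_range_iff_exists_fun K).2 ⟨headProj K h w, ?_⟩
  ext j
  simp only [Finset.sum_apply, Pi.smul_apply, smul_eq_mul, liftRow]
  by_cases hj : (j : ℕ) < k
  · simp only [hj, if_true, mul_ite, mul_one, mul_zero]
    rw [Finset.sum_eq_single_of_mem (⟨j, hj⟩ : Fin k) (Finset.mem_univ _) fun i _ hi =>
      if_neg fun hij => hi (Fin.ext hij), if_pos rfl]
    rfl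
  · have htail := congrFun hw ⟨j - k, by omega⟩
    have hindex : (⟨k + (j - k), by omega⟩ : Fin v) = j :=
      Fin.ext (Nat.add_sub_cancel' (not_lt.1 hj))
    simp only [tailProj, LinearMap.funLeft_apply, hindex] at htail
    simp only [hj, if_false, dif_pos (show (j : ℕ) - k < v - k by omega), ← htail, Matrix.vecMul,
      dotProduct]

theorem exists_le_finrank_inf_span_liftRow [Fintype K] (h : k ≤ v) {t r : ℕ}
    {R : Set (Matrix (Fin k) (Fin (v - k)) K)} (hR : R.ncard = Fintype.card K ^ ((v - k) * t))
    (hrank : ∀ A ∈ R, ∀ B ∈ R, A ≠ B → r ≤ (A - B).rank) (htr : k < t + r)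
    (U : Submodule K (Fin v → K)) (hU : t ≤ finrank K (U.map (headProj K h))) :
    ∃ A ∈ R, t ≤ finrank K ↥(U ⊓ Submodule.span K (Set.range (liftRow A))) := by
  obtain ⟨b, hbU, hb⟩ := exists_linearIndependent_comp_of_le_finrank_map (headProj K h) U hU
  obtain ⟨A, hA, hPA⟩ := exists_mul_eq_of_ncard_eq hR hrank htr
    (P := Matrix.of (headProj K h ∘ b)) hb (Matrix.of (tailProj K h ∘ b))
  have hspan : Submodule.span K (Set.range b) ≤
      U ⊓ Submodule.span K (Set.range (liftRow A)) := by
    rw [Submodule.span_le, Set.range_subset_iff]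
    exact fun i => ⟨hbU i, mem_span_liftRow h A (congrFun hPA i)⟩
  refine ⟨A, hA, ?_⟩
  simpa only [finrank_span_eq_card hb.of_comp, Fintype.card_fin] using Submodule.finrank_mono hspan

namespace IsLMRD

variable {d : ℕ} {C M : Set (Submodule K (Fin v → K))}

theorem ncard_le [Finite K] {q : ℕ} (hM : IsLMRD q K v d k M) :
    M.ncard ≤ q ^ ((v - k) * (k - d / 2 + 1)) := by
  obtain ⟨R, hRcard, -, rfl⟩ := hM
  have himage : {U | ∃ A ∈ R, U = Submodule.span K (Set.range (liftRow A))} =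
      (fun A => Submodule.span K (Set.range (liftRow A))) '' R := by
    ext U
    exact exists_congr fun A => and_congr_right fun _ => eq_comm
  rw [himage, ← hRcard]
  exact Set.ncard_image_le

theorem half_le_finrank_inf_Gamma [Fintype K] (hM : IsLMRD (Fintype.card K) K v d k M)
    (hC : IsCDC K v d k C) (hMC : M ⊆ C) (hdk : d / 2 ≤ k) (hkv : k ≤ v)
    {U : Submodule K (Fin v → K)} (hU : U ∈ C \ M) :
    d / 2 ≤ finrank K ↥(U ⊓ Gamma K k v) := by
  obtain ⟨R, hRcard, hRrank, rfl⟩ := hM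
  have hdim := hC.1 U hU.1
  have hsum := finrank_map_add_finrank_inf_ker (headProj K hkv) U
  rw [ker_headProj] at hsum
  by_contra! hlt
  obtain ⟨A, hA, hAU⟩ :=
    exists_le_finrank_inf_span_liftRow hkv hRcard hRrank (by omega) U (by omega)
  have hUA := hC.add_two_mul_finrank_inf_le hU.1 (hMC ⟨A, hA, rfl⟩) fun h => hU.2 ⟨A, hA, h⟩
  omega

end IsLMRD

end LiftedMRD

/-- the second LMRD bound (Proposition 2 of the paper). -/
theorem stmt9 (q : ℕ) (K : Type) [Field K] [Fintype K] (hq : Fintype.card K = q)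
    (v d k : ℕ) (hd : Even d) (hd2 : 2 ≤ d / 2) (hdk : d / 2 ≤ k) (hkv : 2 * k ≤ v)
    (C M : Set (Submodule K (Fin v → K)))
    (hC : IsCDC K v (d : ℤ) (k : ℤ) C) (hM : IsLMRD q K v d k M) (hMC : M ⊆ C)
    (c y : ℤ) (hy1 : 1 ≤ y) (hy2 : y ≤ (d : ℤ) / 2)
    (hc1 : 1 ≤ c) (hc2 : c ≤ (k : ℤ) - (d : ℤ) / 2) (hc3 : c ≤ (d : ℤ) / 2)
    (hcy : (k : ℤ) - (d : ℤ) / 2 + 1 ≤ c + y) :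
    (C.ncard : ℚ) ≤ (q : ℚ) ^ ((v - k) * (k - d / 2 + 1))
      + (qBin q ((v : ℤ) - k) y * qBin q (k : ℤ) c)
          / (qBin q ((k : ℤ) - (d : ℤ) / 2) c * qBin q ((d : ℤ) / 2) y)
          * (q : ℚ) ^ (c * ((v : ℤ) - k - (d : ℤ) / 2))
      + (Amax K (v - k) ((d : ℤ) - 2 * (c - 1)) ((k : ℤ) - c + 1) : ℚ) := by
  subst hq
  lift c to ℕ using by omega
  lift y to ℕ using by omega
  have hδ : (d : ℤ) / 2 = ((d / 2 : ℕ) : ℤ) := by omega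
  have hΓ : finrank K (Gamma K k v) = v - k := finrank_Gamma (by omega)
  have : Finite (Submodule K (Fin v → K)) := Finite.of_injective _ SetLike.coe_injective
  let B := {U : Submodule K (Fin v → K) | k < finrank K ↥(U ⊓ Gamma K k v) + c}
  have hB := (hC.mono (D := (C \ M) ∩ B) fun U hU => hU.1.1).ncard_le_Amax_of_lt_finrank_inf_add
    (Gamma K k v) (c := c) (by omega) (by omega) fun U hU => by exact_mod_cast hU.2
  have hS := ncard_le_qBin (Gamma K k v) (S := (C \ M) \ B) (k := k) (δ := d / 2) (y := y) (c := c)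
    (by omega) (by omega) (by omega) (by omega) (by rw [hΓ, finrank_fin_fun]; omega)
    (fun U hU => Nat.cast_injective (hC.1 U hU.1.1))
    (fun U hU => hM.half_le_finrank_inf_Gamma hC hMC hdk (by omega) hU.1)
    (fun U hU => not_lt.1 hU.2)
    fun U hU W hW hne => by have := hC.add_two_mul_finrank_inf_le hU.1.1 hW.1.1 hne; omega
  rw [hΓ] at hB
  rw [hΓ, Nat.cast_sub (by omega : k ≤ v), ← hδ] at hS
  rw [← Set.ncard_sdiff_add_ncard_of_subset hMC, ← Set.ncard_inter_add_ncard_sdiff_eq_ncard _ B,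
    add_comm, add_comm ((C \ M) ∩ B).ncard, ← add_assoc, Nat.cast_add, Nat.cast_add]
  gcongr
  exact_mod_cast hM.ncard_le
end

section
/- Let q be a prime power and let k, v, r be integers with 2 ≤ k, 3k ≤ v, r ≡ v (mod k), 0 ≤ r < k, and (q^r − 1)/(q − 1) < k. Then A_q(v, 2k; k) = q^{v−k} + A_q(v−k, 2k; k), and this maximum is attained by a (v, A_q(v,2k;k), 2k; k)_q constant dimension code containing a (v,2k;k)_q lifted MRD code. -/
open Module

/-!
Codes of minimum distance `2k` are partial `k`-spreads. The liftings of a rank metric code of full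
minimum distance meet `Γ` trivially, so that an optimal code inside `Γ` can be added to them. This
gives the lower bound, and iterating it gives a partial spread of size
`1 + q ^ (k + r) + q ^ (2k + r) + ... + q ^ (v - k)`.

This size is optimal by the argument of Năstase and Sissokho. With one member more there would be
`(q - 1) (c q ^ k - (q ^ k - 1) / (q - 1))` nonzero uncovered vectors, `c = (q ^ r - 1) / (q - 1)`.
On a hyperplane the members lose at most one dimension each, so the number of uncovered vectors
there has the same shape, with `k - 1` for `k` and some `c'` for `c`. A hyperplane with at most the
average number of them has `c' < c`. After `k` such steps the last parameter is still nonnegative,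
whence `k ≤ c`.
-/

open Function Finset

/-- The holes of a family of subspaces: the nonzero vectors which none of its members covers. A
point of the projective space counts with its `q - 1` representatives. -/
def holes {K W ι : Type*} [Field K] [AddCommGroup W] [Module K W] (U : ι → Submodule K W) :
    Set W :=
  {x | x ≠ 0 ∧ ∀ i, x ∉ U i}

section Holes

variable {K W ι : Type*} [Field K] [AddCommGroup W] [Module K W]

lemma mem_holes {U : ι → Submodule K W} {x : W} : x ∈ holes U ↔ x ≠ 0 ∧ ∀ i, x ∉ U i :=
  Iff.rfl

lemma holes_union_iUnion_sdiff_zero (U : ι → Submodule K W) :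
    holes U ∪ ⋃ i, ((U i : Set W) \ {0}) = ((⊤ : Submodule K W) : Set W) \ {0} := by
  ext x
  by_cases hx : x = 0
  · simp [mem_holes, hx]
  · simpa [mem_holes, hx] using (em (∃ i, x ∈ U i)).symm

lemma image_val_holes_submoduleOf (U : ι → Submodule K W) (H : Submodule K W) :
    Subtype.val '' holes (fun i ↦ (U i).submoduleOf H) = holes U ∩ H := by
  ext x
  simp only [Set.mem_image, mem_holes, Set.mem_inter_iff, SetLike.mem_coe, Subtype.exists,
    Submodule.submoduleOf, Submodule.mem_comap, Submodule.subtype_apply, exists_and_right,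
    exists_eq_right, ne_eq, Submodule.mk_eq_zero]
  tauto

lemma ncard_holes_submoduleOf (U : ι → Submodule K W) (H : Submodule K W) :
    (holes fun i ↦ (U i).submoduleOf H).ncard = (holes U ∩ H).ncard := by
  rw [← image_val_holes_submoduleOf, Set.ncard_image_of_injective _ Subtype.val_injective]

lemma disjoint_submoduleOf {U₁ U₂ : Submodule K W} (h : Disjoint U₁ U₂) (H : Submodule K W) :
    Disjoint (U₁.submoduleOf H) (U₂.submoduleOf H) :=
  Submodule.disjoint_def.2 fun _ h₁ h₂ ↦ Subtype.ext (Submodule.disjoint_def.1 h _ h₁ h₂)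

lemma finrank_add_finrank_le_finrank_submoduleOf_add [FiniteDimensional K W]
    (U H : Submodule K W) :
    finrank K U + finrank K H ≤ finrank K (U.submoduleOf H) + finrank K W := by
  have hinf : finrank K (U.submoduleOf H) = finrank K ↥(U ⊓ H) := by
    rw [inf_comm, ← Submodule.map_comap_subtype]
    exact (Submodule.equivMapOfInjective _ H.injective_subtype _).finrank_eq
  have hsup := Submodule.finrank_sup_add_finrank_inf_eq U H
  have hle := Submodule.finrank_le (U ⊔ H)
  omega

end Holes

section Counting

variable {K W ι : Type*} [Field K] [Fintype K] [AddCommGroup W] [Module K W]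

local notation "q" => Fintype.card K

lemma ncard_sdiff_zero [Finite W] (U : Submodule K W) :
    (((U : Set W) \ {0}).ncard : ℤ) = (q : ℤ) ^ finrank K U - 1 := by
  have hcard : (U : Set W).ncard = q ^ finrank K U := by
    rw [← Nat.card_coe_set_eq, ← Nat.card_eq_fintype_card]
    exact Module.natCard_eq_pow_finrank
  rw [eq_sub_iff_add_eq]
  exact_mod_cast (Set.ncard_sdiff_singleton_add_one U.zero_mem (Set.toFinite _)).trans hcard

lemma ncard_holes_add_sum [Finite W] [Fintype ι] {U : ι → Submodule K W}
    (hU : Pairwise (Disjoint on U)) :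
    ((holes U).ncard : ℤ) + ∑ i, ((q : ℤ) ^ finrank K (U i) - 1) =
      (q : ℤ) ^ finrank K W - 1 := by
  have hholes : Disjoint (holes U) (⋃ i, ((U i : Set W) \ {0})) :=
    Set.disjoint_iUnion_right.2 fun i ↦ Set.disjoint_left.2 fun x hx hxi ↦ hx.2 i hxi.1
  have hpair : Pairwise (Disjoint on fun i ↦ ((U i : Set W) \ {0})) := fun i j hij ↦
    Set.disjoint_left.2 fun x hxi hxj ↦
      hxi.2 (Submodule.disjoint_def.1 (hU hij) x hxi.1 hxj.1)
  rw [← finrank_top, ← ncard_sdiff_zero, ← holes_union_iUnion_sdiff_zero U,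
    Set.ncard_union_eq hholes, Set.ncard_iUnion_of_finite (fun _ ↦ Set.toFinite _) hpair,
    finsum_eq_sum_of_fintype]
  push_cast
  simp only [ncard_sdiff_zero]

lemma card_mul_card_dual_apply_eq_zero [DecidableEq K] [Finite W] [Fintype (Dual K W)] {x : W}
    (hx : x ≠ 0) : q * #{φ : Dual K W | φ x = 0} = Fintype.card (Dual K W) := by
  have hne : Dual.eval K W x ≠ 0 := (Module.eval_apply_eq_zero_iff K x).not.2 hx
  have hker : #{φ : Dual K W | φ x = 0} = q ^ finrank K (LinearMap.ker (Dual.eval K W x)) := by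
    rw [← Fintype.card_subtype, ← Nat.card_eq_fintype_card, ← Nat.card_eq_fintype_card]
    exact Module.natCard_eq_pow_finrank (K := K) (V := LinearMap.ker (Dual.eval K W x))
  rw [hker, ← pow_succ', Module.Dual.finrank_ker_add_one_of_ne_zero hne,
    Module.card_eq_pow_finrank (K := K) (V := Dual K W)]

lemma sum_card_mul_card_filter_dual [DecidableEq K] [Finite W] [Fintype (Dual K W)]
    {T : Finset W} (hT : 0 ∉ T) :
    ∑ φ : Dual K W, q * #{x ∈ T | φ x = 0} = Fintype.card (Dual K W) * #T := by
  calc ∑ φ : Dual K W, q * #{x ∈ T | φ x = 0}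
      = ∑ x ∈ T, q * #{φ : Dual K W | φ x = 0} := by
        rw [← mul_sum, ← mul_sum]
        exact congrArg _
          (sum_card_bipartiteAbove_eq_sum_card_bipartiteBelow fun (φ : Dual K W) x ↦ φ x = 0)
    _ = ∑ _x ∈ T, Fintype.card (Dual K W) :=
        sum_congr rfl fun x hx ↦ card_mul_card_dual_apply_eq_zero (ne_of_mem_of_not_mem hx hT)
    _ = Fintype.card (Dual K W) * #T := by rw [sum_const, smul_eq_mul, mul_comm]

-- The zero functional contributes `q * |T| ≥ |T|` to the double count, so the other functionals
-- cannot all lie above the average.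
lemma exists_hyperplane_card_mul_ncard_inter_le [Finite W] [Nontrivial W] {T : Set W}
    (hT : 0 ∉ T) : ∃ H : Submodule K W, finrank K H + 1 = finrank K W ∧
      q * (T ∩ H).ncard ≤ T.ncard := by
  classical
  have := Module.finite_of_finite K (M := Dual K W)
  have := Fintype.ofFinite (Dual K W)
  lift T to Finset W using T.toFinite
  have hcount := sum_card_mul_card_filter_dual (K := K) (T := T) hT
  have hzero : #T ≤ q * #{x ∈ T | (0 : Dual K W) x = 0} := by
    simpa using Nat.le_mul_of_pos_left _ Fintype.card_pos
  have hsum : ∑ φ ∈ univ.erase (0 : Dual K W), q * #{x ∈ T | φ x = 0} ≤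
      ∑ _φ ∈ univ.erase (0 : Dual K W), #T := by
    have htotal : ∑ φ : Dual K W, q * #{x ∈ T | φ x = 0} = ∑ _φ : Dual K W, #T := by
      rw [hcount, sum_const, card_univ, smul_eq_mul]
    rw [← add_sum_erase _ _ (mem_univ 0), ← add_sum_erase _ _ (mem_univ 0)] at htotal
    omega
  obtain ⟨ψ, hψ⟩ := exists_ne (0 : Dual K W)
  obtain ⟨φ, hφ, hle⟩ := exists_le_of_sum_le ⟨ψ, by simpa using hψ⟩ hsum
  refine ⟨LinearMap.ker φ, Dual.finrank_ker_add_one_of_ne_zero (ne_of_mem_erase hφ), ?_⟩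
  have hinter : (T ∩ LinearMap.ker φ : Set W) = ↑{x ∈ T | φ x = 0} := by
    ext x
    simp
  rwa [hinter, Set.ncard_coe_finset, Set.ncard_coe_finset]

end Counting

section FewHoles

variable {K ι : Type*} [Field K] [Fintype K] [Fintype ι]

local notation "q" => Fintype.card K

lemma exists_ncard_holes_eq {W : Type*} [AddCommGroup W] [Module K W] [Finite W]
    {U : ι → Submodule K W} (hU : Pairwise (Disjoint on U)) {e : ℕ}
    (he : ∀ i, e ≤ finrank K (U i)) (heW : e ≤ finrank K W)
    (hι : (q : ℤ) ^ e ∣ Fintype.card ι - 2) :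
    ∃ c : ℤ, ((holes U).ncard : ℤ) = (q - 1) * c * (q : ℤ) ^ e - ((q : ℤ) ^ e - 1) := by
  have hcount := ncard_holes_add_sum hU
  have hdvd_sub_one (n : ℕ) : (q : ℤ) - 1 ∣ (q : ℤ) ^ n - 1 := by
    simpa using sub_dvd_pow_sub_pow (q : ℤ) 1 n
  have hsub_one : (q : ℤ) - 1 ∣ (holes U).ncard + ((q : ℤ) ^ e - 1) := by
    rw [eq_sub_of_add_eq hcount]
    exact ((hdvd_sub_one _).sub (dvd_sum fun i _ ↦ hdvd_sub_one _)).add (hdvd_sub_one _)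
  have hpow : (q : ℤ) ^ e ∣ (holes U).ncard + ((q : ℤ) ^ e - 1) := by
    have hsplit : ((holes U).ncard : ℤ) + ((q : ℤ) ^ e - 1) =
        (q : ℤ) ^ finrank K W + (Fintype.card ι - 2) + (q : ℤ) ^ e -
          ∑ i, (q : ℤ) ^ finrank K (U i) := by
      simp only [sum_sub_distrib, sum_const, card_univ, nsmul_one] at hcount
      linarith
    rw [hsplit]
    exact (((pow_dvd_pow _ heW).add hι).add dvd_rfl).sub
      (dvd_sum fun i _ ↦ pow_dvd_pow _ (he i))
  have hcoprime : IsCoprime ((q : ℤ) - 1) ((q : ℤ) ^ e) := IsCoprime.pow_right ⟨-1, 1, by ring⟩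
  obtain ⟨c, hc⟩ := hcoprime.mul_dvd hsub_one hpow
  exact ⟨c, by linarith⟩

-- Passing to a hyperplane with at most the average number of holes lowers `e` by one, and lowers
-- `c` by at least one because of the summand `1` in the number of holes.
lemma le_of_ncard_holes_eq {W : Type*} [AddCommGroup W] [Module K W] [Finite W]
    {U : ι → Submodule K W} (hU : Pairwise (Disjoint on U)) {e : ℕ}
    (he : ∀ i, e ≤ finrank K (U i)) (heW : e ≤ finrank K W)
    (hι : (q : ℤ) ^ e ∣ Fintype.card ι - 2) {c : ℤ}
    (hc : ((holes U).ncard : ℤ) = (q - 1) * c * (q : ℤ) ^ e - ((q : ℤ) ^ e - 1)) :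
    (e : ℤ) ≤ c := by
  have hq : (1 : ℤ) < q := mod_cast Fintype.one_lt_card
  induction e generalizing W c with
  | zero =>
    have hnonneg : (0 : ℤ) ≤ (q - 1) * c := by
      have := Int.natCast_nonneg (holes U).ncard
      simpa [hc] using this
    exact nonneg_of_mul_nonneg_right hnonneg (sub_pos.2 hq)
  | succ e ih =>
    have : Nontrivial W := Module.nontrivial_of_finrank_pos (R := K) (by omega)
    obtain ⟨H, hH, hle⟩ := exists_hyperplane_card_mul_ncard_inter_le (K := K) (T := holes U)
      fun h ↦ h.1 rfl
    rw [← ncard_holes_submoduleOf] at hle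
    have hUH : Pairwise (Disjoint on fun i ↦ (U i).submoduleOf H) :=
      fun _ _ hij ↦ disjoint_submoduleOf (hU hij) H
    have heH (i : ι) : e ≤ finrank K ((U i).submoduleOf H) := by
      have := finrank_add_finrank_le_finrank_submoduleOf_add (U i) H
      have := he i
      omega
    have hιH := (pow_dvd_pow (q : ℤ) e.le_succ).trans hι
    obtain ⟨d, hd⟩ := exists_ncard_holes_eq hUH heH (by omega) hιH
    have hed : (e : ℤ) ≤ d := ih hUH heH (by omega) hιH hd
    have hdc : d < c := by
      have hle : (q : ℤ) * (holes fun i ↦ (U i).submoduleOf H).ncard ≤ (holes U).ncard :=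
        mod_cast hle
      rw [hc, hd] at hle
      have hpos : 0 < (q - 1 : ℤ) * (q : ℤ) ^ (e + 1) := by
        have := sub_pos.2 hq
        positivity
      refine lt_of_mul_lt_mul_left ?_ hpos.le
      rw [pow_succ] at hle ⊢
      linarith
    push_cast
    omega

end FewHoles

section PartialSpread

variable {K V V' : Type*} [Field K] [AddCommGroup V] [Module K V] [AddCommGroup V'] [Module K V']

/-- A partial `k`-spread: a set of `k`-dimensional subspaces with pairwise trivial intersection. -/
structure IsPartialSpread (k : ℕ) (C : Set (Submodule K V)) : Prop where
  finrank_eq : ∀ U ∈ C, finrank K U = k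
  pairwiseDisjoint : C.PairwiseDisjoint id

namespace IsPartialSpread

variable {k : ℕ} {C D : Set (Submodule K V)}

lemma singleton {U : Submodule K V} (hU : finrank K U = k) : IsPartialSpread k {U} :=
  ⟨by simpa using hU, Set.pairwiseDisjoint_singleton _ _⟩

lemma mono (hC : IsPartialSpread k C) (hDC : D ⊆ C) : IsPartialSpread k D :=
  ⟨fun U hU ↦ hC.finrank_eq U (hDC hU), hC.pairwiseDisjoint.subset hDC⟩

lemma union (hC : IsPartialSpread k C) (hD : IsPartialSpread k D)
    (hCD : ∀ U ∈ C, ∀ W ∈ D, Disjoint U W) : IsPartialSpread k (C ∪ D) :=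
  ⟨fun U hU ↦ hU.elim (hC.finrank_eq U) (hD.finrank_eq U),
    hC.pairwiseDisjoint.union hD.pairwiseDisjoint fun U hU W hW _ ↦ hCD U hU W hW⟩

lemma image_map (hC : IsPartialSpread k C) {f : V →ₗ[K] V'} (hf : Injective f) :
    IsPartialSpread k (Submodule.map f '' C) where
  finrank_eq := by
    rintro _ ⟨U, hU, rfl⟩
    rw [← hC.finrank_eq U hU]
    exact (Submodule.equivMapOfInjective f hf U).finrank_eq.symm
  pairwiseDisjoint := by
    rintro _ ⟨U, hU, rfl⟩ _ ⟨W, hW, rfl⟩ hne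
    exact Submodule.disjoint_map hf (hC.pairwiseDisjoint hU hW (ne_of_apply_ne _ hne))

end IsPartialSpread

end PartialSpread

/-- The size of a largest partial `k`-spread in dimension `(t + 1) * k + r` over a field with `q`
elements, when `(q ^ r - 1) / (q - 1) < k`. This is the sum form of
`(q ^ ((t + 1) * k + r) - q ^ (k + r)) / (q ^ k - 1) + 1`. -/
def spreadSize (q k r t : ℕ) : ℕ := 1 + ∑ i ∈ range t, q ^ ((i + 1) * k + r)

lemma spreadSize_zero (q k r : ℕ) : spreadSize q k r 0 = 1 := rfl

lemma spreadSize_succ (q k r t : ℕ) :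
    spreadSize q k r (t + 1) = q ^ ((t + 1) * k + r) + spreadSize q k r t := by
  rw [spreadSize, sum_range_succ, spreadSize]
  ring

lemma spreadSize_sub_one_mul (q k r t : ℕ) :
    (spreadSize q k r t - 1 : ℤ) * (q ^ k - 1) = q ^ ((t + 1) * k + r) - q ^ (k + r) := by
  induction t with
  | zero => simp [spreadSize_zero]
  | succ t ih =>
    rw [spreadSize_succ]
    push_cast
    linear_combination ih

lemma pow_dvd_spreadSize_sub_one (q k r t : ℕ) : (q : ℤ) ^ k ∣ spreadSize q k r t - 1 := by
  rw [spreadSize, Nat.cast_add, Nat.cast_one, add_sub_cancel_left]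
  push_cast
  exact dvd_sum fun i _ ↦ pow_dvd_pow _ (by nlinarith)

theorem IsPartialSpread.ncard_le_spreadSize {K W : Type*} [Field K] [Fintype K] [AddCommGroup W]
    [Module K W] [Finite W] {k r t : ℕ} {C : Set (Submodule K W)} (hC : IsPartialSpread k C)
    (hW : finrank K W = (t + 1) * k + r) (hr : ∑ i ∈ range r, Fintype.card K ^ i < k) :
    C.ncard ≤ spreadSize (Fintype.card K) k r t := by
  by_contra! hlt
  obtain ⟨D, hDC, hD⟩ := Set.exists_subset_card_eq (Nat.succ_le_of_lt hlt)
  have := Fintype.ofFinite D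
  have hdisj : Pairwise (Disjoint on fun U : D ↦ U.1) :=
    (hC.mono hDC).pairwiseDisjoint.subtype _ _
  have hrank (U : D) : finrank K U.1 = k := (hC.mono hDC).finrank_eq U U.2
  have hcard : Fintype.card D = spreadSize (Fintype.card K) k r t + 1 := by
    rw [← Nat.card_eq_fintype_card, Nat.card_coe_set_eq, hD]
  have hholes : ((holes fun U : D ↦ U.1).ncard : ℤ) =
      (Fintype.card K - 1) * (∑ i ∈ range r, Fintype.card K ^ i : ℕ) * (Fintype.card K : ℤ) ^ k -
        ((Fintype.card K : ℤ) ^ k - 1) := by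
    have hcount := ncard_holes_add_sum hdisj
    simp only [hrank, sum_const, card_univ, hcard, hW, nsmul_eq_mul] at hcount
    have hsize := spreadSize_sub_one_mul (Fintype.card K) k r t
    have hgeom := mul_geom_sum (Fintype.card K : ℤ) r
    push_cast at hcount ⊢
    linear_combination hcount - hsize - (Fintype.card K : ℤ) ^ k * hgeom
  have hdvd : (Fintype.card K : ℤ) ^ k ∣ Fintype.card D - 2 := by
    have hsub : (Fintype.card D : ℤ) - 2 = spreadSize (Fintype.card K) k r t - 1 := by
      rw [hcard]
      push_cast
      ring
    rw [hsub]
    exact pow_dvd_spreadSize_sub_one _ k r t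
  have hle := le_of_ncard_holes_eq hdisj (fun U ↦ (hrank U).ge) (by rw [hW]; nlinarith) hdvd hholes
  exact hr.not_ge (mod_cast hle)

section ConstantDimensionCode

variable {K : Type} [Field K] {v : ℕ}

lemma two_mul_le_sDist_iff {k : ℕ} {U W : Submodule K (Fin v → K)} (hU : finrank K U = k)
    (hW : finrank K W = k) : 2 * k ≤ sDist U W ↔ Disjoint U W := by
  have h := Submodule.finrank_sup_add_finrank_inf_eq U W
  rw [disjoint_iff, ← Submodule.finrank_eq_zero (R := K), sDist]
  omega

lemma isCDC_two_mul_iff_isPartialSpread {k : ℕ} {C : Set (Submodule K (Fin v → K))} :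
    IsCDC K v (2 * (k : ℤ)) k C ↔ IsPartialSpread k C := by
  constructor
  · rintro ⟨hrank, hdist⟩
    have hrank (U) (hU : U ∈ C) : finrank K U = k := mod_cast hrank U hU
    exact ⟨hrank, fun U hU W hW hne ↦
      (two_mul_le_sDist_iff (hrank U hU) (hrank W hW)).1 (mod_cast hdist U hU W hW hne)⟩
  · rintro ⟨hrank, hdisj⟩
    exact ⟨fun U hU ↦ mod_cast hrank U hU, fun U hU W hW hne ↦ mod_cast
      (two_mul_le_sDist_iff (hrank U hU) (hrank W hW)).2 (hdisj hU hW hne)⟩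

variable [Finite K] {d k : ℤ}

lemma bddAbove_ncard_isCDC :
    BddAbove {n | ∃ C : Set (Submodule K (Fin v → K)), IsCDC K v d k C ∧ C.ncard = n} := by
  refine ⟨Nat.card (Submodule K (Fin v → K)), ?_⟩
  rintro _ ⟨C, -, rfl⟩
  exact Set.ncard_le_card C

lemma IsCDC.ncard_le_Amax_s13 {C : Set (Submodule K (Fin v → K))} (hC : IsCDC K v d k C) :
    C.ncard ≤ Amax K v d k :=
  le_csSup bddAbove_ncard_isCDC ⟨C, hC, rfl⟩

variable (K v d k) in
lemma exists_isCDC_ncard_eq_Amax :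
    ∃ C : Set (Submodule K (Fin v → K)), IsCDC K v d k C ∧ C.ncard = Amax K v d k := by
  have hne : {n | ∃ C : Set (Submodule K (Fin v → K)), IsCDC K v d k C ∧ C.ncard = n}.Nonempty :=
    ⟨0, ∅, by simp [IsCDC], Set.ncard_empty _⟩
  exact Nat.sSup_mem hne bddAbove_ncard_isCDC

end ConstantDimensionCode

section RankMetricCode

lemma linearIndependent_row_leftMulMatrix {K L n : Type*} [Field K] [Field L] [Algebra K L]
    [Fintype n] [DecidableEq n] (b : Basis n K L) {β : L} (hβ : β ≠ 0) :
    LinearIndependent K (Algebra.leftMulMatrix b β).row :=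
  Matrix.linearIndependent_rows_iff_isUnit.2 ((IsUnit.mk0 β hβ).map (Algebra.leftMulMatrix b))

lemma exists_ncard_eq_pow_pairwise_linearIndependent_row_sub (K : Type*) [Field K] [Finite K]
    {k m : ℕ} (hk : 0 < k) (hkm : k ≤ m) :
    ∃ R : Set (Matrix (Fin k) (Fin m) K), R.ncard = Nat.card K ^ m ∧
      R.Pairwise fun A B ↦ LinearIndependent K (A - B).row := by
  obtain ⟨p, hp⟩ := CharP.exists K
  have : Fact p.Prime := ⟨CharP.char_is_prime K p⟩
  have : NeZero m := ⟨by omega⟩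
  let L := FiniteField.Extension K p m
  let b : Basis (Fin m) K L := finBasisOfFinrankEq K L (FiniteField.finrank_extension K p m)
  let f (β : L) : Matrix (Fin k) (Fin m) K :=
    (Algebra.leftMulMatrix b β).submatrix (Fin.castLE hkm) id
  have hf {β γ : L} (h : β ≠ γ) : LinearIndependent K (f β - f γ).row := by
    have hsub : f β - f γ = f (β - γ) := by simp [f, Matrix.submatrix_sub]
    rw [hsub]
    exact (linearIndependent_row_leftMulMatrix b (sub_ne_zero.2 h)).comp _
      (Fin.castLE_injective hkm)
  have hinj : Injective f := by
    intro β γ h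
    by_contra hne
    exact (hf hne).ne_zero ⟨0, hk⟩ (by rw [h, sub_self]; rfl)
  refine ⟨Set.range f, ?_, ?_⟩
  · rw [← Nat.card_coe_set_eq, Nat.card_range_of_injective hinj, FiniteField.natCard_extension]
  · rintro _ ⟨β, rfl⟩ _ ⟨γ, rfl⟩ hne
    exact hf (ne_of_apply_ne f hne)

end RankMetricCode

section Lifting

open Matrix

variable {K : Type} [Field K] {k v : ℕ}

/-- The lifting `rowspan (I_k | A)` of a matrix `A`. -/
def liftSpan (A : Matrix (Fin k) (Fin (v - k)) K) : Submodule K (Fin v → K) :=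
  Submodule.span K (Set.range (liftRow A))

/-- The position among all `v` coordinates of the `j`-th of the last `v - k`. -/
def tailIndex (k v : ℕ) (j : Fin (v - k)) : Fin v := ⟨k + j, by omega⟩

lemma tailIndex_injective : Injective (tailIndex k v) := fun i j h ↦ by
  simpa [tailIndex, Fin.ext_iff] using h

lemma sum_smul_liftRow_castLE (hkv : k ≤ v) (A : Matrix (Fin k) (Fin (v - k)) K)
    (c : Fin k → K) (i : Fin k) : (∑ l, c l • liftRow A l) (Fin.castLE hkv i) = c i := by
  simp [Finset.sum_apply, liftRow, Fin.val_inj]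

lemma sum_smul_liftRow_tailIndex (A : Matrix (Fin k) (Fin (v - k)) K) (c : Fin k → K)
    (j : Fin (v - k)) : (∑ l, c l • liftRow A l) (tailIndex k v j) = (c ᵥ* A) j := by
  simp [Finset.sum_apply, liftRow, tailIndex, vecMul, dotProduct]

lemma finrank_liftSpan (hkv : k ≤ v) (A : Matrix (Fin k) (Fin (v - k)) K) :
    finrank K (liftSpan A) = k := by
  have hA : LinearIndependent K (liftRow A) := Fintype.linearIndependent_iff.2 fun c hc i ↦ by
    rw [← sum_smul_liftRow_castLE hkv A c i, hc, Pi.zero_apply]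
  exact (finrank_span_eq_card hA).trans (Fintype.card_fin k)

lemma disjoint_liftSpan_of_linearIndependent (hkv : k ≤ v)
    {A B : Matrix (Fin k) (Fin (v - k)) K} (h : LinearIndependent K (A - B).row) :
    Disjoint (liftSpan A) (liftSpan B) := by
  refine Submodule.disjoint_def.2 fun x hA hB ↦ ?_
  obtain ⟨c, rfl⟩ := (Submodule.mem_span_range_iff_exists_fun K).1 hA
  obtain ⟨c', hc'⟩ := (Submodule.mem_span_range_iff_exists_fun K).1 hB
  obtain rfl : c' = c := by
    ext i
    rw [← sum_smul_liftRow_castLE hkv A c i, ← hc', sum_smul_liftRow_castLE]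
  have hvec : c' ᵥ* (A - B) = 0 := by
    ext j
    rw [vecMul_sub, Pi.sub_apply, ← sum_smul_liftRow_tailIndex, ← sum_smul_liftRow_tailIndex, hc',
      sub_self, Pi.zero_apply]
  obtain rfl : c' = 0 := vecMul_injective_iff.2 h (hvec.trans (zero_vecMul _).symm)
  simp

lemma disjoint_liftSpan_Gamma (hkv : k ≤ v) (A : Matrix (Fin k) (Fin (v - k)) K) :
    Disjoint (liftSpan A) (Gamma K k v) := by
  refine Submodule.disjoint_def.2 fun x hA hx ↦ ?_
  obtain ⟨c, rfl⟩ := (Submodule.mem_span_range_iff_exists_fun K).1 hA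
  have hc (i : Fin k) : c i = 0 := by
    rw [← sum_smul_liftRow_castLE hkv A c i]
    exact hx _ i.2
  simp [hc]

lemma map_extendByZero_tailIndex_le_Gamma (W : Submodule K (Fin (v - k) → K)) :
    W.map (ExtendByZero.linearMap K (tailIndex k v)) ≤ Gamma K k v := by
  rintro _ ⟨x, -, rfl⟩ j hj
  refine extend_apply' _ _ _ ?_
  rintro ⟨i, rfl⟩
  exact hj.not_ge (Nat.le_add_right k i)

lemma isPartialSpread_image_liftSpan (hkv : k ≤ v) {R : Set (Matrix (Fin k) (Fin (v - k)) K)}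
    (hR : R.Pairwise fun A B ↦ LinearIndependent K (A - B).row) :
    IsPartialSpread k (liftSpan '' R) where
  finrank_eq := by
    rintro _ ⟨A, -, rfl⟩
    exact finrank_liftSpan hkv A
  pairwiseDisjoint := by
    rintro _ ⟨A, hA, rfl⟩ _ ⟨B, hB, rfl⟩ hne
    exact disjoint_liftSpan_of_linearIndependent hkv (hR hA hB (ne_of_apply_ne _ hne))

lemma liftSpan_ne_bot (hk : 0 < k) (hkv : k ≤ v) (A : Matrix (Fin k) (Fin (v - k)) K) :
    liftSpan A ≠ ⊥ := by
  intro h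
  have := finrank_liftSpan hkv A
  rw [h, finrank_bot] at this
  omega

lemma injOn_liftSpan (hk : 0 < k) (hkv : k ≤ v) {R : Set (Matrix (Fin k) (Fin (v - k)) K)}
    (hR : R.Pairwise fun A B ↦ LinearIndependent K (A - B).row) : R.InjOn liftSpan :=
  fun A hA _ hB h ↦ by_contra fun hne ↦
    (disjoint_liftSpan_of_linearIndependent hkv (hR hA hB hne)).ne (liftSpan_ne_bot hk hkv A) h

lemma isLMRD_image_liftSpan {q : ℕ} {R : Set (Matrix (Fin k) (Fin (v - k)) K)}
    (hcard : R.ncard = q ^ (v - k)) (hR : R.Pairwise fun A B ↦ LinearIndependent K (A - B).row) :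
    IsLMRD q K v (2 * k) k (liftSpan '' R) := by
  have hd : 2 * k / 2 = k := Nat.mul_div_cancel_left k two_pos
  refine ⟨R, by rw [hcard, hd, Nat.sub_self, zero_add, mul_one], fun A hA B hB hne ↦ ?_, ?_⟩
  · rw [hd, (hR hA hB hne).rank_matrix, Fintype.card_fin]
  · ext U
    simp only [liftSpan, Set.mem_image, Set.mem_ofPred_eq, eq_comm]

theorem exists_isCDC_isLMRD_subset (K : Type) [Field K] [Fintype K] (hk : 0 < k)
    (hv : 2 * k ≤ v) :
    ∃ C M : Set (Submodule K (Fin v → K)),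
      IsCDC K v (2 * (k : ℤ)) k C ∧ IsLMRD (Fintype.card K) K v (2 * k) k M ∧ M ⊆ C ∧
      C.ncard = Fintype.card K ^ (v - k) + Amax K (v - k) (2 * (k : ℤ)) k := by
  have hkv : k ≤ v := by omega
  obtain ⟨R, hRcard, hR⟩ :=
    exists_ncard_eq_pow_pairwise_linearIndependent_row_sub K (m := v - k) hk (by omega)
  rw [Nat.card_eq_fintype_card] at hRcard
  obtain ⟨D, hD, hDcard⟩ := exists_isCDC_ncard_eq_Amax K (v - k) (2 * (k : ℤ)) k
  have hext : Injective (ExtendByZero.linearMap K (tailIndex k v)) :=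
    extend_injective tailIndex_injective 0
  have hcross : ∀ U ∈ liftSpan '' R,
      ∀ W ∈ Submodule.map (ExtendByZero.linearMap K (tailIndex k v)) '' D, Disjoint U W := by
    rintro _ ⟨A, -, rfl⟩ _ ⟨W, -, rfl⟩
    exact (disjoint_liftSpan_Gamma hkv A).mono_right (map_extendByZero_tailIndex_le_Gamma W)
  refine ⟨liftSpan '' R ∪ _, liftSpan '' R, isCDC_two_mul_iff_isPartialSpread.2 <|
    (isPartialSpread_image_liftSpan hkv hR).union
      ((isCDC_two_mul_iff_isPartialSpread.1 hD).image_map hext) hcross,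
    isLMRD_image_liftSpan hRcard hR, Set.subset_union_left, ?_⟩
  rw [Set.ncard_union_eq, (injOn_liftSpan hk hkv hR).ncard_image, hRcard,
    Set.ncard_image_of_injective _ (Submodule.map_injective_of_injective hext), hDcard]
  rw [Set.disjoint_left]
  rintro _ ⟨A, hA, rfl⟩ hAD
  exact (hcross _ ⟨A, hA, rfl⟩ _ hAD).ne (liftSpan_ne_bot hk hkv A) rfl

end Lifting

section MaximumSize

lemma add_one_mul_add_sub (s k r : ℕ) : (s + 1) * k + r - k = s * k + r := by
  rw [add_one_mul, add_right_comm, Nat.add_sub_cancel]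

variable (K : Type) [Field K] [Fintype K] {k r : ℕ}

lemma spreadSize_le_Amax (hk : 0 < k) (r t : ℕ) :
    spreadSize (Fintype.card K) k r t ≤ Amax K ((t + 1) * k + r) (2 * (k : ℤ)) k := by
  induction t with
  | zero =>
    have hkv : k ≤ (0 + 1) * k + r := by omega
    have hU := finrank_liftSpan hkv (0 : Matrix (Fin k) (Fin ((0 + 1) * k + r - k)) K)
    have hC := isCDC_two_mul_iff_isPartialSpread.2 (IsPartialSpread.singleton hU)
    simpa [spreadSize_zero] using hC.ncard_le_Amax_s13
  | succ t ih =>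
    obtain ⟨C, -, hC, -, -, hcard⟩ := exists_isCDC_isLMRD_subset K (v := (t + 1 + 1) * k + r) hk
      (by nlinarith)
    rw [add_one_mul_add_sub] at hcard
    rw [spreadSize_succ]
    have := hC.ncard_le_Amax_s13
    omega

theorem Amax_eq_spreadSize (hr : ∑ i ∈ range r, Fintype.card K ^ i < k) (t : ℕ) :
    Amax K ((t + 1) * k + r) (2 * (k : ℤ)) k = spreadSize (Fintype.card K) k r t := by
  refine le_antisymm ?_ (spreadSize_le_Amax K (Nat.zero_lt_of_lt hr) r t)
  obtain ⟨C, hC, hcard⟩ := exists_isCDC_ncard_eq_Amax K ((t + 1) * k + r) (2 * (k : ℤ)) k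
  rw [← hcard]
  exact (isCDC_two_mul_iff_isPartialSpread.1 hC).ncard_le_spreadSize (finrank_fin_fun K) hr

theorem Amax_eq_pow_add_Amax_sub (hr : ∑ i ∈ range r, Fintype.card K ^ i < k) {v : ℕ}
    (hv : 2 * k ≤ v) (hmod : r ≡ v [MOD k]) :
    Amax K v (2 * (k : ℤ)) k =
      Fintype.card K ^ (v - k) + Amax K (v - k) (2 * (k : ℤ)) k := by
  have hrk : r < k := by
    refine lt_of_le_of_lt ?_ hr
    simpa using card_nsmul_le_sum (range r) _ 1 fun i _ ↦ Nat.one_le_pow i _ Fintype.card_pos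
  obtain ⟨t, rfl⟩ : ∃ t, v = (t + 1 + 1) * k + r := by
    have hvr : v % k = r := by rw [← hmod, Nat.mod_eq_of_lt hrk]
    have hvk : 2 ≤ v / k := (Nat.le_div_iff_mul_le (by omega)).2 hv
    exact ⟨v / k - 2, by rw [← hvr, (by omega : v / k - 2 + 1 + 1 = v / k), Nat.div_add_mod']⟩
  rw [add_one_mul_add_sub, Amax_eq_spreadSize K hr, Amax_eq_spreadSize K hr, spreadSize_succ]

end MaximumSize

theorem stmt13_general (q : ℕ) (K : Type) [Field K] [Fintype K] (hq : Fintype.card K = q)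
    (k v r : ℕ) (hv : 2 * k ≤ v) (hr : r ≡ v [MOD k]) (hspread : (q ^ r - 1) / (q - 1) < k) :
    Amax K v (2 * (k : ℤ)) (k : ℤ) = q ^ (v - k) + Amax K (v - k) (2 * (k : ℤ)) (k : ℤ) ∧
    ∃ C M : Set (Submodule K (Fin v → K)),
      IsCDC K v (2 * (k : ℤ)) (k : ℤ) C ∧ IsLMRD q K v (2 * k) k M ∧ M ⊆ C ∧
      C.ncard = Amax K v (2 * (k : ℤ)) (k : ℤ) := by
  subst hq
  rw [← Nat.geomSum_eq Fintype.one_lt_card] at hspread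
  have hAmax := Amax_eq_pow_add_Amax_sub K hspread hv hr
  obtain ⟨C, M, hC, hM, hMC, hcard⟩ := exists_isCDC_isLMRD_subset K (Nat.zero_lt_of_lt hspread) hv
  exact ⟨hAmax, C, M, hC, hM, hMC, hcard.trans hAmax.symm⟩

/-- for `2 ≤ k`, `3k ≤ v`, `r ≡ v (mod k)`, `0 ≤ r < k` and
`(q^r - 1)/(q - 1) < k` we have `A_q(v,2k;k) = q^(v-k) + A_q(v-k,2k;k)`, attained
by a CDC containing an LMRD. -/
theorem stmt13 (q : ℕ) (K : Type) [Field K] [Fintype K] (hq : Fintype.card K = q)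
    (k v r : ℕ) (hk : 2 ≤ k) (hv : 3 * k ≤ v) (hr : r ≡ v [MOD k]) (hrk : r < k)
    (hspread : (q ^ r - 1) / (q - 1) < k) :
    Amax K v (2 * (k : ℤ)) (k : ℤ) = q ^ (v - k) + Amax K (v - k) (2 * (k : ℤ)) (k : ℤ) ∧
    ∃ C M : Set (Submodule K (Fin v → K)),
      IsCDC K v (2 * (k : ℤ)) (k : ℤ) C ∧ IsLMRD q K v (2 * k) k M ∧ M ⊆ C ∧
      C.ncard = Amax K v (2 * (k : ℤ)) (k : ℤ) := by
  exact stmt13_general q K hq k v r (by omega) hr hspread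
end
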